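/- Let G be a chain graph with chain components 𝒯 and ≺ a consistent strict total order of 𝒯. Suppose that for every T ∈ 𝒯 the induced subgraph G_T is complete (every pair of nodes in T is joined by an undirected edge) and pa_G(A) = pa_D(T) for every nonempty A ⊆ T. Then a strictly positive joint probability mass function p obeys the multivariate regression Markov property for G if and only if A ⊥ (pre(T)∖pa_D(T)) | pa_D(T) for every nonempty A ⊆ T and every T ∈ 𝒯, and this condition holds if and only if p factorizes as p(i) = ∏_{T∈𝒯} p(i_T | i_{pa_D(T)}). -/

import Mathlib

open scoped Classical BigOperators

/-- A mixed graph on a node set `V`: a set of directed edges and a symmetric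
irreflexive set of undirected edges, the two edge sets being disjoint. -/
structure MixedGraph (V : Type*) where
  dir : V → V → Prop
  undir : V → V → Prop
  undir_symm : ∀ {a b}, undir a b → undir b a
  undir_irrefl : ∀ a, ¬ undir a a
  edge_disjoint : ∀ a b, dir a b → ¬ undir a b

namespace MixedGraph

variable {V : Type*} [Fintype V] [DecidableEq V] (G : MixedGraph V)

/-- One step of a semi-directed path: an undirected edge or a directed edge
followed in the direction of traversal. -/
def step (a b : V) : Prop := G.dir a b ∨ G.undir a b

/-- No semi-directed cycle: there is no directed edge `a → b` together with a
semi-directed path from `b` back to `a`. -/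
def NoSemiDirectedCycle : Prop :=
  ∀ a b : V, G.dir a b → ¬ Relation.ReflTransGen G.step b a

/-- Two nodes are in the same chain component iff they are joined by a path of
undirected edges (the equivalence relation generated by the undirected part). -/
def sameComp (a b : V) : Prop := Relation.ReflTransGen G.undir a b

/-- The chain component of a node. -/
noncomputable def component (v : V) : Finset V :=
  Finset.univ.filter fun w => G.sameComp v w

/-- `T` is a chain component of `G`. -/
def IsComponent (T : Finset V) : Prop := ∃ v, T = G.component v

/-- The collection of chain components of `G`. -/
noncomputable def componentsF : Finset (Finset V) :=
  Finset.univ.image fun v => G.component v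

/-- The parents `pa_G(A)`: nodes outside `A` with a directed edge into `A`. -/
noncomputable def paG (A : Finset V) : Finset V :=
  Finset.univ.filter fun w => w ∉ A ∧ ∃ v ∈ A, G.dir w v

/-- The (inclusive) neighbours `Nb_G(A)`: `A` together with all nodes joined to
`A` by an undirected edge. -/
noncomputable def nbG (A : Finset V) : Finset V :=
  A ∪ Finset.univ.filter fun w => ∃ v ∈ A, G.undir v w

/-- The edge relation of the directed graph `D` of chain components:
`T₁ → T₂` iff they are distinct chain components and `G` has a directed edge
from a node of `T₁` to a node of `T₂`. -/
def dirD (T₁ T₂ : Finset V) : Prop :=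
  G.IsComponent T₁ ∧ G.IsComponent T₂ ∧ T₁ ≠ T₂ ∧ ∃ v ∈ T₁, ∃ w ∈ T₂, G.dir v w

/-- `pa_D(T)`: the union of the parent components of `T` in `D`. -/
noncomputable def paD (T : Finset V) : Finset V :=
  Finset.univ.filter fun w => G.dirD (G.component w) T

/-- `nd_D(T)`: the union of the components `T'` such that there is no directed
path from `T` to `T'` in `D`. -/
noncomputable def ndD (T : Finset V) : Finset V :=
  Finset.univ.filter fun w => ¬ Relation.ReflTransGen G.dirD T (G.component w)

/-- A set of nodes `A` is connected if the subgraph of the undirected part of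
`G` induced by `A` is connected (in particular nonempty). -/
def ConnectedIn (A : Finset V) : Prop :=
  A.Nonempty ∧ ∀ a ∈ A, ∀ b ∈ A,
    Relation.ReflTransGen (fun x y => x ∈ A ∧ y ∈ A ∧ G.undir x y) a b

/-- The connected component of `v` inside the induced subgraph on `A`. -/
noncomputable def compIn (A : Finset V) (v : V) : Finset V :=
  A.filter fun w =>
    Relation.ReflTransGen (fun x y => x ∈ A ∧ y ∈ A ∧ G.undir x y) v w

/-- The set of connected components of the induced subgraph on `A`. -/
noncomputable def connComps (A : Finset V) : Finset (Finset V) :=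
  A.image fun v => G.compIn A v

/-- `ord` is a strict total order of the chain components consistent with `G`:
`ord T T'` implies that `T` is not a parent component of `T'`. -/
def ConsistentOrder (ord : Finset V → Finset V → Prop) : Prop :=
  (∀ T₁ T₂, G.IsComponent T₁ → G.IsComponent T₂ → T₁ ≠ T₂ →
      ord T₁ T₂ ∨ ord T₂ T₁) ∧
  (∀ T, G.IsComponent T → ¬ ord T T) ∧
  (∀ T₁ T₂ T₃, G.IsComponent T₁ → G.IsComponent T₂ → G.IsComponent T₃ →
      ord T₁ T₂ → ord T₂ T₃ → ord T₁ T₃) ∧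
  (∀ T₁ T₂, G.IsComponent T₁ → G.IsComponent T₂ → ord T₁ T₂ → ¬ G.dirD T₁ T₂)

/-- `pre(T)`: the union of all the chain components `T'` with `T ≺ T'`
(the predecessors, i.e. the past, of `T`). -/
noncomputable def pre (ord : Finset V → Finset V → Prop) (T : Finset V) :
    Finset V :=
  Finset.univ.filter fun w => ord T (G.component w)

end MixedGraph

/-- A cell of the joint contingency table: variable `v` takes one of the
levels `0, …, r v - 1` (level `0` playing the role of the first level `1`). -/
abbrev Cell {V : Type*} (r : V → ℕ) := ∀ v : V, Fin (r v)

variable {V : Type*} [Fintype V] [DecidableEq V] {r : V → ℕ}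

/-- The marginal probability `p_S(i_S)` (as a function of a full cell `i`,
depending on it only through the coordinates in `S`). -/
noncomputable def marginal (p : Cell r → ℝ) (S : Finset V) (i : Cell r) : ℝ :=
  ∑ j : Cell r, if ∀ v ∈ S, j v = i v then p j else 0

/-- The conditional probability `p_{A|B}(i_A | i_B)`. -/
noncomputable def condProb (p : Cell r → ℝ) (A B : Finset V) (i : Cell r) : ℝ :=
  marginal p (A ∪ B) i / marginal p B i

/-- `p` is a strictly positive joint probability mass function. -/
def IsPosPMF (p : Cell r → ℝ) : Prop :=
  (∀ i, 0 < p i) ∧ ∑ i : Cell r, p i = 1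

/-- Conditional independence `A ⊥ B | C`. -/
def CondIndep (p : Cell r → ℝ) (A B C : Finset V) : Prop :=
  ∀ i : Cell r,
    marginal p (A ∪ B ∪ C) i * marginal p C i =
      marginal p (A ∪ C) i * marginal p (B ∪ C) i

/-- The cell agreeing with `i` on `S` and equal to the first (reference)
level outside `S`. -/
def splice (hr : ∀ v, 2 ≤ r v) (S : Finset V) (i : Cell r) : Cell r :=
  fun v => if v ∈ S then i v else ⟨0, by have := hr v; omega⟩

/-- The conditional multivariate logistic contrast
`η^{(A)}(i_A | i_B) = Σ_{s ⊆ A} (−1)^{|A∖s|} log p_{A|B}((i_s, 1_{A∖s}) | i_B)`. -/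
noncomputable def mlContrast (hr : ∀ v, 2 ≤ r v) (p : Cell r → ℝ)
    (A B : Finset V) (i : Cell r) : ℝ :=
  ∑ s ∈ A.powerset,
    (-1 : ℝ) ^ (A \ s).card * Real.log (condProb p A B (splice hr (s ∪ B) i))

/-- The multivariate regression (MR) Markov property for the chain graph `G`
with respect to the consistent ordering `ord`: for every chain component `T`
and every nonempty `A ⊆ T`, (MR1) if `A` is connected then
`A ⊥ (pre(T)∖pa_G(A)) | pa_G(A)`, and (MR2) if `A` is disconnected then its
connected components are mutually independent given `pre(T)`. -/
def MRMarkov (G : MixedGraph V) (ord : Finset V → Finset V → Prop)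
    (p : Cell r → ℝ) : Prop :=
  ∀ T : Finset V, G.IsComponent T → ∀ A ⊆ T, A.Nonempty →
    (G.ConnectedIn A →
      CondIndep p A (G.pre ord T \ G.paG A) (G.paG A)) ∧
    (¬ G.ConnectedIn A →
      ∀ i : Cell r,
        condProb p A (G.pre ord T) i =
          ∏ Aj ∈ G.connComps A, condProb p Aj (G.pre ord T) i)

/-- The block-recursive Markov property of type IV for the chain graph `G`:
(IV0) `T ⊥ (nd_D(T)∖pa_D(T)) | pa_D(T)`;
(IV1) `A ⊥ (pa_D(T)∖pa_G(A)) | pa_G(A)` for all `A ⊆ T`;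
(IV2) `A ⊥ (T∖Nb_G(A)) | pa_D(T)` for all connected `A ⊆ T`. -/
def TypeIVMarkov (G : MixedGraph V) (p : Cell r → ℝ) : Prop :=
  (∀ T : Finset V, G.IsComponent T →
      CondIndep p T (G.ndD T \ G.paD T) (G.paD T)) ∧
  (∀ T : Finset V, G.IsComponent T → ∀ A ⊆ T,
      CondIndep p A (G.paD T \ G.paG A) (G.paG A)) ∧
  (∀ T : Finset V, G.IsComponent T → ∀ A ⊆ T, G.ConnectedIn A →
      CondIndep p A (T \ G.nbG A) (G.paD T))

section Helpers

theorem marginal_congr' (p : Cell r → ℝ) (S : Finset V) (i j : Cell r)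
    (h : ∀ v ∈ S, i v = j v) : marginal p S i = marginal p S j := by
  unfold marginal
  refine Finset.sum_congr rfl fun k _ => ?_
  have : (∀ v ∈ S, k v = i v) ↔ (∀ v ∈ S, k v = j v) :=
    forall₂_congr fun v hv => by rw [h v hv]
  simp only [this]

theorem marginal_pos' (p : Cell r → ℝ) (hp : IsPosPMF p) (S : Finset V) (i : Cell r) :
    0 < marginal p S i := by
  unfold marginal
  refine Finset.sum_pos' (fun j _ => ?_) ⟨i, Finset.mem_univ _, ?_⟩
  · split_ifs
    · exact (hp.1 j).le
    · exact le_rfl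
  · simpa using hp.1 i

theorem marginal_empty' (p : Cell r → ℝ) (hp : IsPosPMF p) (i : Cell r) :
    marginal p ∅ i = 1 := by
  simpa [marginal] using hp.2

theorem marginal_univ' (p : Cell r → ℝ) (i : Cell r) :
    marginal p Finset.univ i = p i := by
  unfold marginal
  have : ∀ j : Cell r, (∀ v ∈ (Finset.univ : Finset V), j v = i v) ↔ j = i := fun j => by
    simp [funext_iff]
  simp only [this]
  simp

theorem marginal_sum' (p : Cell r → ℝ) (S U D : Finset V) (hD : D = U \ S) (hSU : S ⊆ U)
    (i : Cell r) :
    ∑ j : Cell r, (if ∀ v, v ∉ D → j v = i v then marginal p U j else 0)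
      = marginal p S i := by
  subst hD
  unfold marginal
  simp only [← Finset.sum_filter]
  rw [Finset.sum_comm' (t' := Finset.univ)
    (s' := fun k => Finset.univ.filter fun j : Cell r =>
      (∀ v, v ∉ U \ S → j v = i v) ∧ ∀ v ∈ U, k v = j v) (by intro x y; simp)]
  rw [Finset.sum_filter]
  refine Finset.sum_congr rfl fun k _ => ?_
  split_ifs with h
  · have : (Finset.univ.filter fun j : Cell r =>
      (∀ v, v ∉ U \ S → j v = i v) ∧ ∀ v ∈ U, k v = j v)
        = {fun v => if v ∈ U \ S then k v else i v} := by
      ext j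
      simp only [Finset.mem_filter, Finset.mem_univ, true_and, Finset.mem_singleton]
      constructor
      · rintro ⟨h1, h2⟩
        funext v
        split_ifs with hv
        · exact (h2 v (Finset.mem_sdiff.1 hv).1).symm
        · exact h1 v hv
      · rintro rfl
        refine ⟨fun v hv => by simp only [hv, if_false], fun v hv => ?_⟩
        by_cases hS : v ∈ S
        · simp [hS, h v hS]
        · simp [hS, hv]
    rw [this]; simp
  · have : (Finset.univ.filter fun j : Cell r =>
      (∀ v, v ∉ U \ S → j v = i v) ∧ ∀ v ∈ U, k v = j v) = ∅ := by
      ext j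
      simp only [Finset.mem_filter, Finset.mem_univ, true_and, Finset.notMem_empty, iff_false]
      rintro ⟨h1, h2⟩
      exact h fun v hv => (h2 v (hSU hv)).trans (h1 v (by simp [hv]))
    rw [this]; simp

theorem condIndep_mono' (p : Cell r → ℝ) (A T B C : Finset V) (hAT : A ⊆ T)
    (hB : Disjoint T B) (hC : Disjoint T C) (h : CondIndep p T B C) :
    CondIndep p A B C := by
  intro i
  have hB' := Finset.disjoint_left.1 hB
  have hC' := Finset.disjoint_left.1 hC
  rw [← marginal_sum' p (A ∪ B ∪ C) (T ∪ B ∪ C) (T \ A) (by ext v; simp; grind)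
      (by intro v; simp; grind) i,
    ← marginal_sum' p (A ∪ C) (T ∪ C) (T \ A) (by ext v; simp; grind)
      (by intro v; simp; grind) i, Finset.sum_mul, Finset.sum_mul]
  refine Finset.sum_congr rfl fun j _ => ?_
  split_ifs with hj
  · rw [marginal_congr' p C i j, marginal_congr' p (B ∪ C) i j]
    · exact h j
    · intro v hv
      refine (hj v fun hv' => ?_).symm
      simp at hv hv'
      grind
    · intro v hv
      refine (hj v fun hv' => ?_).symm
      simp at hv'
      grind
  · simp

theorem marginal_step' (p : Cell r → ℝ) (hp : IsPosPMF p) (T P Q : Finset V)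
    (hTP : Disjoint T P) (hQP : Q ⊆ P) (F : Cell r → ℝ)
    (hF : ∀ i j : Cell r, (∀ v ∈ P, i v = j v) → F i = F j)
    (h : ∀ j, marginal p (T ∪ P) j = condProb p T Q j * F j) (i : Cell r) :
    marginal p P i = F i := by
  have hd := Finset.disjoint_left.1 hTP
  rw [← marginal_sum' p P (T ∪ P) T (by ext v; simp; grind) (by intro v; simp; grind) i]
  have h2 := marginal_sum' p Q (T ∪ Q) T (by ext v; simp; grind) (by intro v; simp; grind) i
  have hpos := marginal_pos' p hp Q i
  have : ∀ j : Cell r, (if ∀ v, v ∉ T → j v = i v then marginal p (T ∪ P) j else 0)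
      = (if ∀ v, v ∉ T → j v = i v then marginal p (T ∪ Q) j else 0)
        * (F i / marginal p Q i) := by
    intro j
    split_ifs with hj
    · rw [h j, condProb, hF j i (fun v hv => hj v fun hv' => hd hv' hv),
        marginal_congr' p Q j i (fun v hv => hj v fun hv' => hd hv' (hQP hv))]
      ring
    · simp
  simp only [this]
  rw [← Finset.sum_mul, h2]
  field_simp

namespace MixedGraph

variable (G : MixedGraph V) (ord : Finset V → Finset V → Prop)

theorem mem_component_self' (v : V) : v ∈ G.component v := by
  simp only [component, Finset.mem_filter, Finset.mem_univ, true_and]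
  exact Relation.ReflTransGen.refl

theorem component_eq' {v w : V} (h : w ∈ G.component v) : G.component w = G.component v := by
  have h1 : G.sameComp v w := by simpa [component] using h
  have hs : Std.Symm G.undir := ⟨fun _ _ h => G.undir_symm h⟩
  have h2 : G.sameComp w v := by
    unfold sameComp at *
    exact Relation.ReflTransGen.stdSymm.symm _ _ h1
  ext x
  simp only [component, Finset.mem_filter, Finset.mem_univ, true_and]
  exact ⟨fun h => Relation.ReflTransGen.trans h1 h, fun h => Relation.ReflTransGen.trans h2 h⟩

theorem mem_componentsF' {T : Finset V} : T ∈ G.componentsF ↔ G.IsComponent T := by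
  simp [componentsF, IsComponent, eq_comm]

theorem component_of_mem' {T : Finset V} (hT : G.IsComponent T) {v : V} (hv : v ∈ T) :
    G.component v = T := by
  obtain ⟨w, rfl⟩ := hT
  exact G.component_eq' hv

/-- The components above `T`. -/
noncomputable def aboveC (T : Finset V) : Finset (Finset V) :=
  G.componentsF.filter fun T' => ord T T'

theorem pre_eq' (T : Finset V) : G.pre ord T = (G.aboveC ord T).biUnion id := by
  ext v
  simp only [pre, aboveC, Finset.mem_filter, Finset.mem_univ, true_and, Finset.mem_biUnion, id]
  constructor
  · intro h
    exact ⟨G.component v, ⟨G.mem_componentsF'.2 ⟨v, rfl⟩, h⟩, G.mem_component_self' v⟩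
  · rintro ⟨T', ⟨hT', h⟩, hv⟩
    rwa [G.component_of_mem' (G.mem_componentsF'.1 hT') hv]

variable {ord}

theorem rank_lt' (hord : G.ConsistentOrder ord) {T T' : Finset V} (hT : G.IsComponent T)
    (hT' : G.IsComponent T') (h : ord T T') :
    (G.aboveC ord T').card < (G.aboveC ord T).card := by
  apply Finset.card_lt_card
  rw [Finset.ssubset_iff_of_subset]
  · refine ⟨T', ?_, ?_⟩
    · simp [aboveC, mem_componentsF', hT', h]
    · simp [aboveC, hord.2.1 T' hT']
  · intro X hX
    simp only [aboveC, Finset.mem_filter, mem_componentsF'] at hX ⊢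
    exact ⟨hX.1, hord.2.2.1 T T' X hT hT' hX.1 h hX.2⟩

theorem paD_subset_pre' (hord : G.ConsistentOrder ord) (T : Finset V) :
    G.paD T ⊆ G.pre ord T := by
  intro w hw
  simp only [paD, pre, Finset.mem_filter, Finset.mem_univ, true_and] at hw ⊢
  rcases hord.1 _ _ hw.1 hw.2.1 hw.2.2.1 with h | h
  · exact absurd hw (hord.2.2.2 _ _ hw.1 hw.2.1 h)
  · exact h

theorem disjoint_pre' (hord : G.ConsistentOrder ord) {T : Finset V} (hT : G.IsComponent T) :
    Disjoint T (G.pre ord T) := by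
  rw [Finset.disjoint_left]
  intro v hv hv'
  simp only [pre, Finset.mem_filter, Finset.mem_univ, true_and] at hv'
  rw [G.component_of_mem' hT hv] at hv'
  exact hord.2.1 T hT hv'

/-- A set of components closed upwards in the order. -/
def UpClosed (ord : Finset V → Finset V → Prop) (S : Finset (Finset V)) : Prop :=
  (∀ T ∈ S, G.IsComponent T) ∧ ∀ T ∈ S, ∀ T', G.IsComponent T' → ord T T' → T' ∈ S

theorem upClosed_above' (hord : G.ConsistentOrder ord) {T : Finset V} (hT : G.IsComponent T) :
    G.UpClosed ord (G.aboveC ord T) := by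
  simp only [UpClosed, aboveC, Finset.mem_filter, mem_componentsF']
  exact ⟨fun _ h => h.1, fun X hX Y hY h => ⟨hY, hord.2.2.1 T X Y hT hX.1 hY hX.2 h⟩⟩

theorem upClosed_insert' (hord : G.ConsistentOrder ord) {T : Finset V} (hT : G.IsComponent T) :
    G.UpClosed ord (insert T (G.aboveC ord T)) := by
  have h := G.upClosed_above' hord hT
  refine ⟨fun X hX => ?_, fun X hX Y hY hXY => ?_⟩
  · rcases Finset.mem_insert.1 hX with rfl | hX
    · exact hT
    · exact h.1 X hX
  · apply Finset.mem_insert_of_mem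
    rcases Finset.mem_insert.1 hX with rfl | hX
    · simp [aboveC, mem_componentsF', hY, hXY]
    · exact h.2 X hX Y hY hXY

theorem notMem_above' (hord : G.ConsistentOrder ord) {T : Finset V} (hT : G.IsComponent T) :
    T ∉ G.aboveC ord T := by
  simp [aboveC, hord.2.1 T hT]

theorem exists_bottom' (hord : G.ConsistentOrder ord) {S : Finset (Finset V)}
    (hS : G.UpClosed ord S) (hne : S.Nonempty) :
    ∃ T, G.IsComponent T ∧ S = insert T (G.aboveC ord T) := by
  obtain ⟨T, hTS, hT⟩ := Finset.exists_max_image S (fun T => (G.aboveC ord T).card) hne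
  refine ⟨T, hS.1 T hTS, ?_⟩
  ext X
  simp only [Finset.mem_insert, aboveC, Finset.mem_filter, mem_componentsF']
  constructor
  · intro hX
    by_cases hXT : X = T
    · exact Or.inl hXT
    · refine Or.inr ⟨hS.1 X hX, ?_⟩
      rcases hord.1 X T (hS.1 X hX) (hS.1 T hTS) hXT with h | h
      · exact absurd (G.rank_lt' hord (hS.1 X hX) (hS.1 T hTS) h) (not_lt.2 (hT X hX))
      · exact h
  · rintro (rfl | ⟨h1, h2⟩)
    · exact hTS
    · exact hS.2 T hTS X h1 h2

theorem exists_next' (hord : G.ConsistentOrder ord) {S : Finset (Finset V)}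
    (hS : G.UpClosed ord S) (hne : (G.componentsF \ S).Nonempty) :
    ∃ T, G.IsComponent T ∧ S = G.aboveC ord T := by
  obtain ⟨T, hTS, hT⟩ := Finset.exists_min_image _ (fun T => (G.aboveC ord T).card) hne
  simp only [Finset.mem_sdiff, mem_componentsF'] at hTS hT
  refine ⟨T, hTS.1, ?_⟩
  ext X
  simp only [aboveC, Finset.mem_filter, mem_componentsF']
  constructor
  · intro hX
    refine ⟨hS.1 X hX, ?_⟩
    have hXT : X ≠ T := fun h => hTS.2 (h ▸ hX)
    rcases hord.1 X T (hS.1 X hX) hTS.1 hXT with h | h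
    · exact absurd (hS.2 X hX T hTS.1 h) hTS.2
    · exact h
  · rintro ⟨h1, h2⟩
    by_contra hX
    exact absurd (G.rank_lt' hord hTS.1 h1 h2) (not_lt.2 (hT X ⟨h1, hX⟩))

theorem condIndep_iff' (hord : G.ConsistentOrder ord) (p : Cell r → ℝ) (hp : IsPosPMF p)
    (T : Finset V) :
    CondIndep p T (G.pre ord T \ G.paD T) (G.paD T) ↔
      ∀ i, marginal p (T ∪ G.pre ord T) i
        = condProb p T (G.paD T) i * marginal p (G.pre ord T) i := by
  unfold CondIndep condProb
  rw [Finset.union_assoc, Finset.sdiff_union_of_subset (G.paD_subset_pre' hord T)]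
  refine forall_congr' fun i => ?_
  have hpos := marginal_pos' p hp (G.paD T) i
  rw [div_mul_eq_mul_div, eq_div_iff hpos.ne']

theorem chain_forward' (hord : G.ConsistentOrder ord) (p : Cell r → ℝ) (hp : IsPosPMF p)
    (h : ∀ T, G.IsComponent T → ∀ i, marginal p (T ∪ G.pre ord T) i
        = condProb p T (G.paD T) i * marginal p (G.pre ord T) i) (n : ℕ) :
    ∀ S : Finset (Finset V), S.card = n → G.UpClosed ord S → ∀ i,
      marginal p (S.biUnion id) i = ∏ T ∈ S, condProb p T (G.paD T) i := by
  induction n with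
  | zero =>
    intro S hS _ i
    rw [Finset.card_eq_zero] at hS
    subst hS
    simp [marginal_empty' p hp]
  | succ n ih =>
    intro S hS hup i
    obtain ⟨T, hT, rfl⟩ := G.exists_bottom' hord hup (Finset.card_pos.1 (by omega))
    rw [Finset.card_insert_of_notMem (G.notMem_above' hord hT)] at hS
    rw [Finset.prod_insert (G.notMem_above' hord hT), Finset.biUnion_insert,
      ← ih _ (by omega) (G.upClosed_above' hord hT) i, ← G.pre_eq' ord T]
    exact h T hT i

theorem prod_congr_cells' (hord : G.ConsistentOrder ord) (p : Cell r → ℝ)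
    {T : Finset V} (hT : G.IsComponent T) (i j : Cell r)
    (hij : ∀ v ∈ G.pre ord T, i v = j v) :
    ∏ X ∈ G.aboveC ord T, condProb p X (G.paD X) i
      = ∏ X ∈ G.aboveC ord T, condProb p X (G.paD X) j := by
  refine Finset.prod_congr rfl fun X hX => ?_
  have hXc := (G.upClosed_above' hord hT).1 X hX
  have h1 : X ⊆ G.pre ord T := by
    rw [G.pre_eq']
    exact Finset.subset_biUnion_of_mem id hX
  have h2 : G.paD X ⊆ G.pre ord T := by
    intro v hv
    have := G.paD_subset_pre' hord X hv
    simp only [pre, Finset.mem_filter, Finset.mem_univ, true_and] at this ⊢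
    simp only [aboveC, Finset.mem_filter] at hX
    exact hord.2.2.1 T X _ hT hXc ⟨v, rfl⟩ hX.2 this
  unfold condProb
  rw [marginal_congr' p _ i j fun v hv => hij v (Finset.union_subset h1 h2 hv),
    marginal_congr' p _ i j fun v hv => hij v (h2 hv)]

theorem chain_backward' (hord : G.ConsistentOrder ord) (p : Cell r → ℝ) (hp : IsPosPMF p)
    (h : ∀ i, marginal p (G.componentsF.biUnion id) i
      = ∏ T ∈ G.componentsF, condProb p T (G.paD T) i) (n : ℕ) :
    ∀ S : Finset (Finset V), (G.componentsF \ S).card = n → G.UpClosed ord S → ∀ i,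
      marginal p (S.biUnion id) i = ∏ T ∈ S, condProb p T (G.paD T) i := by
  induction n with
  | zero =>
    intro S hS hup i
    rw [Finset.card_eq_zero, Finset.sdiff_eq_empty_iff_subset] at hS
    have : S = G.componentsF :=
      Finset.Subset.antisymm (fun X hX => G.mem_componentsF'.2 (hup.1 X hX)) hS
    rw [this]; exact h i
  | succ n ih =>
    intro S hS hup i
    obtain ⟨T, hT, rfl⟩ := G.exists_next' hord hup (Finset.card_pos.1 (by omega))
    have hn := G.notMem_above' hord hT
    have hc : (G.componentsF \ insert T (G.aboveC ord T)).card = n := by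
      rw [Finset.sdiff_insert, Finset.card_erase_of_mem, hS]
      · rfl
      · simp [mem_componentsF', hT, hn]
    have key := ih _ hc (G.upClosed_insert' hord hT)
    rw [← G.pre_eq']
    refine marginal_step' p hp T (G.pre ord T) (G.paD T) (G.disjoint_pre' hord hT)
      (G.paD_subset_pre' hord T) _ (G.prod_congr_cells' hord p hT) (fun j => ?_) i
    have := key j
    rwa [Finset.prod_insert hn, Finset.biUnion_insert, ← G.pre_eq'] at this

theorem biUnion_componentsF' : G.componentsF.biUnion id = Finset.univ := by
  ext v
  simp only [Finset.mem_biUnion, id, Finset.mem_univ, iff_true]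
  exact ⟨_, G.mem_componentsF'.2 ⟨v, rfl⟩, G.mem_component_self' v⟩

theorem upClosed_all' : G.UpClosed ord G.componentsF :=
  ⟨fun _ h => G.mem_componentsF'.1 h, fun _ _ _ h _ => G.mem_componentsF'.2 h⟩

end MixedGraph

end Helpers

/-- Remark 3: if every chain component induces a complete
undirected subgraph and `pa_G(A) = pa_D(T)` for every nonempty `A ⊆ T`, then
the multivariate regression Markov property is equivalent to
`A ⊥ (pre(T)∖pa_D(T)) | pa_D(T)` for all nonempty `A ⊆ T` and all `T`, which
in turn is equivalent to the factorization
`p(i) = ∏_T p(i_T | i_{pa_D(T)})`. -/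
theorem mr_markov_complete_components
    {V : Type*} [Fintype V] [DecidableEq V] {r : V → ℕ} (hr : ∀ v, 2 ≤ r v)
    (G : MixedGraph V) (hG : G.NoSemiDirectedCycle)
    (ord : Finset V → Finset V → Prop) (hord : G.ConsistentOrder ord)
    (p : Cell r → ℝ) (hp : IsPosPMF p)
    (hcomplete : ∀ T : Finset V, G.IsComponent T →
      ∀ a ∈ T, ∀ b ∈ T, a ≠ b → G.undir a b)
    (hpa : ∀ T : Finset V, G.IsComponent T → ∀ A ⊆ T, A.Nonempty →
      G.paG A = G.paD T) :
    (MRMarkov G ord p ↔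
      ∀ T : Finset V, G.IsComponent T → ∀ A ⊆ T, A.Nonempty →
        CondIndep p A (G.pre ord T \ G.paD T) (G.paD T)) ∧
    ((∀ T : Finset V, G.IsComponent T → ∀ A ⊆ T, A.Nonempty →
        CondIndep p A (G.pre ord T \ G.paD T) (G.paD T)) ↔
      ∀ i : Cell r, p i = ∏ T ∈ G.componentsF, condProb p T (G.paD T) i) := by
  have hconn : ∀ T : Finset V, G.IsComponent T → ∀ A ⊆ T, A.Nonempty → G.ConnectedIn A := by
    intro T hT A hA hne
    refine ⟨hne, fun a ha b hb => ?_⟩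
    by_cases hab : a = b
    · subst hab
      exact Relation.ReflTransGen.refl
    · exact Relation.ReflTransGen.single
        ⟨ha, hb, hcomplete T hT a (hA ha) b (hA hb) hab⟩
  refine ⟨⟨fun h T hT A hA hne => ?_, fun h T hT A hA hne => ⟨fun _ => ?_, fun hn => ?_⟩⟩,
    fun h i => ?_, fun h T hT A hA hne => ?_⟩
  · have := (h T hT A hA hne).1 (hconn T hT A hA hne)
    rwa [hpa T hT A hA hne] at this
  · rw [hpa T hT A hA hne]
    exact h T hT A hA hne
  · exact absurd (hconn T hT A hA hne) hn
  · have h' := G.chain_forward' hord p hp (fun T hT =>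
      (G.condIndep_iff' hord p hp T).1 (h T hT T (Finset.Subset.refl T) (by
        obtain ⟨v, rfl⟩ := hT
        exact ⟨v, G.mem_component_self' v⟩))) _ _ rfl G.upClosed_all' i
    rwa [G.biUnion_componentsF', marginal_univ'] at h'
  · have hb : ∀ i, marginal p (G.componentsF.biUnion id) i
        = ∏ T ∈ G.componentsF, condProb p T (G.paD T) i := by
      intro i
      rw [G.biUnion_componentsF', marginal_univ']
      exact h i
    have hc := G.chain_backward' hord p hp hb
    have hd := G.disjoint_pre' hord hT
    refine condIndep_mono' p A T _ _ hA (hd.mono_right Finset.sdiff_subset)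
      (hd.mono_right (G.paD_subset_pre' hord T)) ((G.condIndep_iff' hord p hp T).2 fun i => ?_)
    have h1 := hc _ _ rfl (G.upClosed_insert' hord hT) i
    have h2 := hc _ _ rfl (G.upClosed_above' hord hT) i
    rw [Finset.prod_insert (G.notMem_above' hord hT), ← h2, Finset.biUnion_insert,
      ← G.pre_eq'] at h1
    exact h1
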